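/- Let n be a positive integer, F = GaloisField 2 n, f : F → F an APN function, and A : F → F an affine map. Then, as real numbers, |{x ∈ F : f(x) = A(x)}| ≤ √(2^(n+1)) + 1/2. -/

import Mathlib

/-!
Subtracting the linear part `L` of the affine map from `f` only translates the right-hand sides of
the equations `f (x + a) - f x = b`, so `f - L` is again APN and the agreement set is one of its
fibres `S`. The pairs of elements of `S` with difference `a ≠ 0` correspond to solutions `x ∈ S` of
`(f - L) (x + a) - (f - L) x = 0`, of which there are at most two. Counting the pairs of distinct
elements of `S` by their difference gives `#S * (#S - 1) ≤ 2 * (2 ^ n - 1)`.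
-/

open Finset in
theorem card_offDiag_le_of_card_differences_le {G : Type*} [AddGroup G] [Fintype G] [DecidableEq G]
    {S : Finset G} {m : ℕ} (hS : ∀ a : G, a ≠ 0 → #{x ∈ S | x + a ∈ S} ≤ m) :
    #S.offDiag ≤ m * (Fintype.card G - 1) := by
  rw [← card_univ, ← card_erase_of_mem (mem_univ 0)]
  refine card_le_mul_card_image_of_maps_to (f := fun p : G × G => -p.1 + p.2) ?_ m ?_
  · rintro ⟨x, y⟩ hxy
    simpa [neg_add_eq_zero] using (mem_offDiag.mp hxy).2.2
  · intro a ha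
    refine (card_le_card_of_injOn Prod.fst ?_ ?_).trans (hS a (ne_of_mem_erase ha))
    · rintro ⟨x, y⟩ hxy
      simp only [mem_coe, mem_filter, mem_offDiag] at hxy ⊢
      obtain ⟨⟨hx, hy, -⟩, rfl⟩ := hxy
      exact ⟨hx, by rwa [add_neg_cancel_left]⟩
    · rintro ⟨x, y⟩ hxy ⟨x', y'⟩ hxy' (rfl : x = x')
      have hdiff : -x + y = -x + y' := (mem_filter.mp hxy).2.trans (mem_filter.mp hxy').2.symm
      rw [add_left_cancel hdiff]

/-- Differential `m`-uniformity of a map between groups: each derivative `x ↦ f (x + a) - f x` in a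
nonzero direction takes every value at most `m` times. Over a field of characteristic two, APN is
the case `m = 2`. Since `Set.ncard` of an infinite set is `0`, this is meant for a finite domain. -/
def IsDifferentiallyUniform {G H : Type*} [AddGroup G] [AddGroup H] (f : G → H) (m : ℕ) : Prop :=
  ∀ a : G, a ≠ 0 → ∀ b : H, {x : G | f (x + a) - f x = b}.ncard ≤ m

namespace IsDifferentiallyUniform

variable {G H : Type*} [AddGroup G] {m : ℕ}

theorem sub_addMonoidHom [AddCommGroup H] {f : G → H} (hf : IsDifferentiallyUniform f m)
    (L : G →+ H) : IsDifferentiallyUniform (fun x => f x - L x) m := by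
  intro a ha b
  have hderiv (x : G) : f (x + a) - L (x + a) - (f x - L x) = f (x + a) - f x - L a := by
    rw [map_add]
    abel
  simpa only [hderiv, sub_eq_iff_eq_add] using hf a ha (b + L a)

theorem ncard_fiber_mul_sub_one_le [AddGroup H] [Finite G] {f : G → H}
    (hf : IsDifferentiallyUniform f m) (c : H) :
    ({x | f x = c}.ncard : ℝ) * ({x | f x = c}.ncard - 1) ≤ m * (Nat.card G - 1) := by
  classical
  have := Fintype.ofFinite G
  set S : Finset G := {x | f x = c} with hS
  have hncard : {x | f x = c}.ncard = S.card := by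
    rw [← Set.ncard_coe_finset, hS, Finset.coe_filter_univ]
  have hpairs : S.offDiag.card ≤ m * (Fintype.card G - 1) := by
    refine card_offDiag_le_of_card_differences_le fun a ha => ?_
    rw [← Set.ncard_coe_finset]
    refine (Set.ncard_le_ncard (fun x hx => ?_)).trans (hf a ha 0)
    obtain ⟨hx, hxa⟩ : f x = c ∧ f (x + a) = c := by simpa [hS] using hx
    exact sub_eq_zero.mpr (hxa.trans hx.symm)
  rw [Finset.offDiag_card] at hpairs
  rw [hncard, Nat.card_eq_fintype_card, mul_sub_one]
  have hreal : ((S.card * S.card - S.card : ℕ) : ℝ) ≤ (m * (Fintype.card G - 1) : ℕ) :=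
    mod_cast hpairs
  rwa [Nat.cast_sub (Nat.le_mul_self _), Nat.cast_mul, Nat.cast_mul,
    Nat.cast_pred Fintype.card_pos] at hreal

end IsDifferentiallyUniform

theorem apn_affine_agreement_bound_general {G H : Type*} [AddGroup G] [Finite G] [AddCommGroup H]
    {f : G → H} {m : ℕ} (hm : 0 < m) (hf : IsDifferentiallyUniform f m) (L : G →+ H) (c : H) :
    ({x | f x = L x + c}.ncard : ℝ) ≤ √(m * Nat.card G) + 1 / 2 := by
  have hpairs := (hf.sub_addMonoidHom L).ncard_fiber_mul_sub_one_le c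
  simp only [sub_eq_iff_eq_add'] at hpairs
  have hm' : (1 : ℝ) ≤ m := mod_cast hm
  rw [← sub_le_iff_le_add]
  apply Real.le_sqrt_of_sq_le
  linarith

theorem apn_affine_agreement_bound
    (n : ℕ) (hn : 0 < n) (f A : GaloisField 2 n → GaloisField 2 n)
    (hAPN : ∀ a : GaloisField 2 n, a ≠ 0 → ∀ b : GaloisField 2 n,
      {x : GaloisField 2 n | f (x + a) + f x = b}.ncard ≤ 2)
    (L : GaloisField 2 n →ₗ[ZMod 2] GaloisField 2 n) (c : GaloisField 2 n)
    (hA : ∀ x, A x = L x + c) :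
    ({x : GaloisField 2 n | f x = A x}.ncard : ℝ) ≤ Real.sqrt (2 ^ (n + 1)) + 1 / 2 := by
  have hf : IsDifferentiallyUniform f 2 := by
    simpa only [IsDifferentiallyUniform, CharTwo.sub_eq_add]
  simpa [hA, GaloisField.card 2 n hn.ne', pow_succ'] using
    apn_affine_agreement_bound_general two_pos hf L.toAddMonoidHom c
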